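/- arXiv:1903.12154 — 2 statements merged into one kernel-verified Lean document; each statement's English description precedes it below -/
import Mathlib

section
/- Non-locality cost bound: let P be a bipartite non-signaling device over finite sets A, B, X, Y, and suppose P = alpha*Q + (1-alpha)*L pointwise, where 0 <= alpha <= 1, Q is a bipartite non-signaling device, and L is a local device, i.e. L(a,b|x,y) = sum over lambda of mu(lambda) * L_A(a|x,lambda) * L_B(b|y,lambda) for some finite set Lambda, probability distribution mu, and conditional probability distributions L_A, L_B. Then N_sq(P) <= alpha * log2(min(|A|, |B|)). -/
/-- Shannon entropy (base-2) of a finitely supported real-valued distribution. -/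
noncomputable def shannonEnt {α : Type} [Fintype α] (p : α → ℝ) : ℝ :=
  -∑ a, p a * Real.logb 2 (p a)

/-- Shannon mutual information (base-2) of a joint distribution on `α × β`. -/
noncomputable def mutInfo {α β : Type} [Fintype α] [Fintype β] (R : α → β → ℝ) : ℝ :=
  shannonEnt (fun a => ∑ b, R a b) + shannonEnt (fun b => ∑ a, R a b) -
    shannonEnt (fun p : α × β => R p.1 p.2)

/-- A bipartite non-signaling device over finite output sets `A`, `B` and input
sets `X`, `Y`. -/
def IsDevice {A B X Y : Type} [Fintype A] [Fintype B] (P : A → B → X → Y → ℝ) : Prop :=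
  (∀ a b x y, 0 ≤ P a b x y) ∧
  (∀ x y, ∑ a, ∑ b, P a b x y = 1) ∧
  (∀ a x y y', ∑ b, P a b x y = ∑ b, P a b x y') ∧
  (∀ b y x x', ∑ a, P a b x y = ∑ a, P a b x' y)

/-- The set of values `∑_e p_e · I(A:B)_{P_e(·,·|x,y)}` over all (finite) ensembles
`{(p_e, P_e)}` of the device `P` into non-signaling devices. -/
def NsqSet {A B X Y : Type} [Fintype A] [Fintype B]
    (P : A → B → X → Y → ℝ) (x : X) (y : Y) : Set ℝ :=
  { r | ∃ (n : ℕ) (p : Fin n → ℝ) (Pe : Fin n → A → B → X → Y → ℝ),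
      (∀ i, 0 ≤ p i) ∧ (∑ i, p i = 1) ∧ (∀ i, IsDevice (Pe i)) ∧
      (∀ a b x' y', ∑ i, p i * Pe i a b x' y' = P a b x' y') ∧
      r = ∑ i, p i * mutInfo (fun a b => Pe i a b x y) }

/-- The squashed non-locality of a bipartite device: the maximum over inputs `(x,y)` of
the infimum over ensembles of the averaged mutual information at fixed inputs. -/
noncomputable def Nsq {A B X Y : Type} [Fintype A] [Fintype B] [Fintype X] [Fintype Y]
    [Nonempty X] [Nonempty Y] (P : A → B → X → Y → ℝ) : ℝ :=
  Finset.univ.sup' Finset.univ_nonempty (fun xy : X × Y => sInf (NsqSet P xy.1 xy.2))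

/-- A local device, i.e. one admitting a local hidden variable model. -/
def IsLocalDevice {A B X Y : Type} [Fintype A] [Fintype B] (P : A → B → X → Y → ℝ) : Prop :=
  ∃ (n : ℕ) (mu : Fin n → ℝ) (LA : A → X → Fin n → ℝ) (LB : B → Y → Fin n → ℝ),
    (∀ i, 0 ≤ mu i) ∧ (∑ i, mu i = 1) ∧
    (∀ a x i, 0 ≤ LA a x i) ∧ (∀ x i, ∑ a, LA a x i = 1) ∧
    (∀ b y i, 0 ≤ LB b y i) ∧ (∀ y i, ∑ b, LB b y i = 1) ∧
    (∀ a b x y, P a b x y = ∑ i, mu i * LA a x i * LB b y i)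

/-!
Squashed non-locality is convex, because ensembles of `Q` and `R` combine into an ensemble of
any mixture of `Q` and `R`. It vanishes on local devices: the hidden-variable model is an ensemble
of product devices, which carry no mutual information. The trivial ensemble bounds it by
`log₂ (min |A| |B|)` on every device. Evaluating convexity at `P = α Q + (1 - α) L` gives the bound.

Gibbs' inequality makes mutual information nonnegative, so the infima over ensembles are genuine
and not the junk value `sInf s = 0` of a set unbounded below.
-/

open Function
open scoped Pointwise

section Entropy

variable {α β : Type} [Fintype α] [Fintype β]

theorem mul_logb_le_mul_logb_add {b p q : ℝ} (hb : 1 < b) (hp : 0 ≤ p) (hq : 0 ≤ q)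
    (hpq : q = 0 → p = 0) :
    p * Real.logb b q ≤ p * Real.logb b p + (q - p) / Real.log b := by
  have hlogb : 0 < Real.log b := Real.log_pos hb
  rcases hp.eq_or_lt with rfl | hp
  · simpa using div_nonneg hq hlogb.le
  have hq : 0 < q := hq.lt_of_ne' fun h => hp.ne' (hpq h)
  have hlog : p * (Real.log q - Real.log p) ≤ q - p := calc
    p * (Real.log q - Real.log p) = p * Real.log (q / p) := by rw [Real.log_div hq.ne' hp.ne']
    _ ≤ p * (q / p - 1) := by gcongr; exact Real.log_le_sub_one_of_pos (by positivity)
    _ = q - p := by field_simp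
  have hdiv := div_le_div_of_nonneg_right hlog hlogb.le
  simp only [Real.logb]
  linear_combination hdiv

theorem shannonEnt_le_neg_sum_mul_logb {p q : α → ℝ} (hp : ∀ a, 0 ≤ p a) (hq : ∀ a, 0 ≤ q a)
    (hpq : ∀ a, q a = 0 → p a = 0) (hsum : ∑ a, q a ≤ ∑ a, p a) :
    shannonEnt p ≤ -∑ a, p a * Real.logb 2 (q a) := by
  refine neg_le_neg ?_
  calc ∑ a, p a * Real.logb 2 (q a)
      ≤ ∑ a, (p a * Real.logb 2 (p a) + (q a - p a) / Real.log 2) :=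
        Finset.sum_le_sum fun a _ => mul_logb_le_mul_logb_add one_lt_two (hp a) (hq a) (hpq a)
    _ = ∑ a, p a * Real.logb 2 (p a) + (∑ a, q a - ∑ a, p a) / Real.log 2 := by
        rw [Finset.sum_add_distrib, ← Finset.sum_div, Finset.sum_sub_distrib]
    _ ≤ ∑ a, p a * Real.logb 2 (p a) :=
        add_le_of_nonpos_right <|
          div_nonpos_of_nonpos_of_nonneg (sub_nonpos.2 hsum) (Real.log_nonneg one_le_two)

theorem shannonEnt_le_logb_card {p : α → ℝ} (hp : p ∈ stdSimplex ℝ α) :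
    shannonEnt p ≤ Real.logb 2 (Fintype.card α) := by
  obtain ⟨hp0, hp1⟩ := hp
  have : Nonempty α := by
    by_contra h
    rw [not_nonempty_iff] at h
    simp at hp1
  have hcard : (Fintype.card α : ℝ) ≠ 0 := Nat.cast_ne_zero.2 Fintype.card_ne_zero
  calc shannonEnt p ≤ -∑ a, p a * Real.logb 2 (Fintype.card α : ℝ)⁻¹ :=
        shannonEnt_le_neg_sum_mul_logb hp0 (fun _ => by positivity)
          (fun _ h => absurd h (inv_ne_zero hcard)) (by simp [hp1, hcard])
    _ = Real.logb 2 (Fintype.card α) := by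
        rw [← Finset.sum_mul, hp1, Real.logb_inv, one_mul, neg_neg]

theorem shannonEnt_comp_equiv (e : α ≃ β) (p : β → ℝ) : shannonEnt (p ∘ e) = shannonEnt p :=
  congrArg Neg.neg (e.sum_comp fun b => p b * Real.logb 2 (p b))

theorem shannonEnt_sum_right_le {R : α → β → ℝ} (hR : ∀ a b, 0 ≤ R a b) :
    shannonEnt (fun a => ∑ b, R a b) ≤ shannonEnt (uncurry R) := by
  simp only [shannonEnt, Fintype.sum_prod_type, Finset.sum_mul, uncurry_apply_pair]
  refine neg_le_neg (Finset.sum_le_sum fun a _ => Finset.sum_le_sum fun b _ => ?_)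
  rcases (hR a b).eq_or_lt with h | h
  · simp [← h]
  · have : R a b ≤ ∑ b, R a b := Finset.single_le_sum (fun b _ => hR a b) (Finset.mem_univ b)
    gcongr
    exact one_lt_two

end Entropy

section MutualInformation

variable {α β : Type} [Fintype α] [Fintype β]

theorem uncurry_flip_mem_stdSimplex {R : α → β → ℝ} (hR : uncurry R ∈ stdSimplex ℝ (α × β)) :
    uncurry (flip R) ∈ stdSimplex ℝ (β × α) :=
  ⟨fun z => hR.1 z.swap, ((Equiv.prodComm β α).sum_comp (uncurry R)).trans hR.2⟩

theorem sum_right_mem_stdSimplex {R : α → β → ℝ} (hR : uncurry R ∈ stdSimplex ℝ (α × β)) :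
    (fun a => ∑ b, R a b) ∈ stdSimplex ℝ α :=
  ⟨fun a => Finset.sum_nonneg fun b _ => hR.1 (a, b), by
    simpa only [Fintype.sum_prod_type, uncurry_apply_pair] using hR.2⟩

theorem mutInfo_flip (R : α → β → ℝ) : mutInfo (flip R) = mutInfo R := by
  have hjoint : shannonEnt (uncurry (flip R)) = shannonEnt (uncurry R) :=
    shannonEnt_comp_equiv (Equiv.prodComm β α) (uncurry R)
  change _ + _ - shannonEnt (uncurry (flip R)) = _ + _ - shannonEnt (uncurry R)
  rw [hjoint, add_comm]
  rfl

theorem mutInfo_le_logb_card_right {R : α → β → ℝ} (hR : uncurry R ∈ stdSimplex ℝ (α × β)) :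
    mutInfo R ≤ Real.logb 2 (Fintype.card β) := by
  have hmarginal : shannonEnt (fun a => ∑ b, R a b) ≤ shannonEnt (uncurry R) :=
    shannonEnt_sum_right_le fun a b => hR.1 (a, b)
  have hcard : shannonEnt (fun b => ∑ a, R a b) ≤ Real.logb 2 (Fintype.card β) :=
    shannonEnt_le_logb_card (sum_right_mem_stdSimplex (uncurry_flip_mem_stdSimplex hR))
  change _ + _ - shannonEnt (uncurry R) ≤ _
  linarith

theorem mutInfo_le_logb_min_card {R : α → β → ℝ} (hR : uncurry R ∈ stdSimplex ℝ (α × β)) :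
    mutInfo R ≤ Real.logb 2 (min (Fintype.card α) (Fintype.card β) : ℕ) := by
  rcases min_choice (Fintype.card α) (Fintype.card β) with h | h <;> rw [h]
  · rw [← mutInfo_flip]
    exact mutInfo_le_logb_card_right (uncurry_flip_mem_stdSimplex hR)
  · exact mutInfo_le_logb_card_right hR

theorem neg_sum_mul_logb_mul_marginals {R : α → β → ℝ} (hR : ∀ a b, 0 ≤ R a b) :
    -∑ z : α × β, R z.1 z.2 * Real.logb 2 ((∑ b, R z.1 b) * ∑ a, R a z.2) =
      shannonEnt (fun a => ∑ b, R a b) + shannonEnt (fun b => ∑ a, R a b) := by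
  have hsplit (a : α) (b : β) : R a b * Real.logb 2 ((∑ b, R a b) * ∑ a, R a b) =
      R a b * Real.logb 2 (∑ b, R a b) + R a b * Real.logb 2 (∑ a, R a b) := by
    by_cases ha : ∑ b, R a b = 0
    · have : R a b = 0 := congrFun ((Fintype.sum_eq_zero_iff_of_nonneg (hR a)).1 ha) b
      simp [this]
    by_cases hb : ∑ a, R a b = 0
    · have : R a b = 0 := congrFun ((Fintype.sum_eq_zero_iff_of_nonneg (hR · b)).1 hb) a
      simp [this]
    rw [Real.logb_mul ha hb, mul_add]
  simp only [Fintype.sum_prod_type, hsplit, Finset.sum_add_distrib, neg_add, shannonEnt]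
  rw [Finset.sum_comm (f := fun a b => R a b * Real.logb 2 (∑ a, R a b))]
  simp only [← Finset.sum_mul]

theorem mutInfo_nonneg {R : α → β → ℝ} (hR : uncurry R ∈ stdSimplex ℝ (α × β)) :
    0 ≤ mutInfo R := by
  have hR0 (a : α) (b : β) : 0 ≤ R a b := hR.1 (a, b)
  have hA := sum_right_mem_stdSimplex hR
  have hB := sum_right_mem_stdSimplex (uncurry_flip_mem_stdSimplex hR)
  have hgibbs : shannonEnt (uncurry R) ≤
      -∑ z : α × β, R z.1 z.2 * Real.logb 2 ((∑ b, R z.1 b) * ∑ a, R a z.2) := by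
    refine shannonEnt_le_neg_sum_mul_logb hR.1 (fun z => mul_nonneg (hA.1 z.1) (hB.1 z.2))
      (fun z h => ?_) ?_
    · rcases mul_eq_zero.1 h with h | h
      · exact congrFun ((Fintype.sum_eq_zero_iff_of_nonneg (hR0 z.1)).1 h) z.2
      · exact congrFun ((Fintype.sum_eq_zero_iff_of_nonneg (hR0 · z.2)).1 h) z.1
    · simp only [Fintype.sum_prod_type, hR.2, ← Finset.sum_mul_sum, hA.2, one_mul]
      exact hB.2.le
  exact sub_nonneg.2 (hgibbs.trans_eq (neg_sum_mul_logb_mul_marginals hR0))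

theorem mutInfo_mul {f : α → ℝ} {g : β → ℝ} (hf : ∑ a, f a = 1) (hg : ∑ b, g b = 1) :
    mutInfo (fun a b => f a * g b) = 0 := by
  have hsplit (a : α) (b : β) : f a * g b * Real.logb 2 (f a * g b)
      = f a * Real.logb 2 (f a) * g b + f a * (g b * Real.logb 2 (g b)) := by
    by_cases ha : f a = 0
    · simp [ha]
    by_cases hb : g b = 0
    · simp [hb]
    rw [Real.logb_mul ha hb]
    ring
  simp only [mutInfo, shannonEnt, Fintype.sum_prod_type, hsplit, Finset.sum_add_distrib,
    ← Finset.mul_sum, ← Finset.sum_mul, hf, hg, mul_one, one_mul]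
  ring

end MutualInformation

section Device

variable {A B X Y : Type} [Fintype A] [Fintype B] {P Q R : A → B → X → Y → ℝ}

theorem IsDevice.uncurry_mem_stdSimplex (hP : IsDevice P) (x : X) (y : Y) :
    uncurry (fun a b => P a b x y) ∈ stdSimplex ℝ (A × B) :=
  ⟨fun z => hP.1 z.1 z.2 x y, (Fintype.sum_prod_type _).trans (hP.2.1 x y)⟩

theorem isDevice_mul {f : A → X → ℝ} {g : B → Y → ℝ}
    (hf0 : ∀ a x, 0 ≤ f a x) (hf1 : ∀ x, ∑ a, f a x = 1)
    (hg0 : ∀ b y, 0 ≤ g b y) (hg1 : ∀ y, ∑ b, g b y = 1) :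
    IsDevice fun a b x y => f a x * g b y := by
  refine ⟨fun a b x y => mul_nonneg (hf0 a x) (hg0 b y), fun x y => ?_, fun a x y y' => ?_,
    fun b y x x' => ?_⟩
  · simp only [← Finset.mul_sum, hg1, mul_one, hf1]
  · simp only [← Finset.mul_sum, hg1]
  · simp only [← Finset.sum_mul, hf1]

theorem convex_setOf_isDevice : Convex ℝ {P : A → B → X → Y → ℝ | IsDevice P} := by
  rintro Q ⟨hQ0, hQ1, hQA, hQB⟩ R ⟨hR0, hR1, hRA, hRB⟩ s t hs ht hst
  refine ⟨fun a b x y => ?_, fun x y => ?_, fun a x y y' => ?_, fun b y x x' => ?_⟩ <;>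
    simp only [Pi.add_apply, Pi.smul_apply, smul_eq_mul, Finset.sum_add_distrib, ← Finset.mul_sum]
  · exact add_nonneg (mul_nonneg hs (hQ0 a b x y)) (mul_nonneg ht (hR0 a b x y))
  · rw [hQ1, hR1, mul_one, mul_one, hst]
  · rw [hQA a x y y', hRA a x y y']
  · rw [hQB b y x x', hRB b y x x']

theorem IsLocalDevice.isDevice (hP : IsLocalDevice P) : IsDevice P := by
  obtain ⟨n, μ, LA, LB, hμ0, hμ1, hA0, hA1, hB0, hB1, hP⟩ := hP
  have hmix : P = ∑ i, μ i • fun a b x y => LA a x i * LB b y i := by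
    ext a b x y
    simp [hP, Finset.sum_apply, mul_assoc]
  rw [hmix]
  exact convex_setOf_isDevice.sum_mem (fun i _ => hμ0 i) hμ1 fun i _ =>
    isDevice_mul (hA0 · · i) (hA1 · i) (hB0 · · i) (hB1 · i)

end Device

section SquashedNonlocality

variable {A B X Y : Type} [Fintype A] [Fintype B] {P Q R : A → B → X → Y → ℝ}

theorem sum_mul_mutInfo_mem_NsqSet {ι : Type*} [Fintype ι] {p : ι → ℝ}
    {Pe : ι → A → B → X → Y → ℝ} (hp : p ∈ stdSimplex ℝ ι) (hPe : ∀ i, IsDevice (Pe i))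
    (hP : ∀ a b x y, ∑ i, p i * Pe i a b x y = P a b x y) (x : X) (y : Y) :
    ∑ i, p i * mutInfo (fun a b => Pe i a b x y) ∈ NsqSet P x y := by
  let e := (Fintype.equivFin ι).symm
  exact ⟨Fintype.card ι, p ∘ e, Pe ∘ e, fun i => hp.1 (e i), (e.sum_comp p).trans hp.2,
    fun i => hPe (e i),
    fun a b x y => (e.sum_comp fun i => p i * Pe i a b x y).trans (hP a b x y),
    (e.sum_comp fun i => p i * mutInfo fun a b => Pe i a b x y).symm⟩

theorem IsDevice.mutInfo_mem_NsqSet (hP : IsDevice P) (x : X) (y : Y) :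
    mutInfo (fun a b => P a b x y) ∈ NsqSet P x y := by
  simpa using sum_mul_mutInfo_mem_NsqSet (ι := Unit) (p := fun _ => 1) (Pe := fun _ => P)
    (by simp [stdSimplex]) (fun _ => hP) (by simp) x y

theorem IsLocalDevice.zero_mem_NsqSet (hP : IsLocalDevice P) (x : X) (y : Y) :
    0 ∈ NsqSet P x y := by
  obtain ⟨n, μ, LA, LB, hμ0, hμ1, hA0, hA1, hB0, hB1, hP⟩ := hP
  refine ⟨n, μ, fun i a b x y => LA a x i * LB b y i, hμ0, hμ1,
    fun i => isDevice_mul (hA0 · · i) (hA1 · i) (hB0 · · i) (hB1 · i),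
    fun a b x y => by simp only [hP, mul_assoc], ?_⟩
  simp only [mutInfo_mul (hA1 x _) (hB1 y _), mul_zero, Finset.sum_const_zero]

theorem nonneg_of_mem_NsqSet {x : X} {y : Y} {r : ℝ} (hr : r ∈ NsqSet P x y) : 0 ≤ r := by
  obtain ⟨n, p, Pe, hp0, -, hPe, -, rfl⟩ := hr
  exact Finset.sum_nonneg fun i _ =>
    mul_nonneg (hp0 i) (mutInfo_nonneg ((hPe i).uncurry_mem_stdSimplex x y))

theorem bddBelow_NsqSet (P : A → B → X → Y → ℝ) (x : X) (y : Y) : BddBelow (NsqSet P x y) :=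
  ⟨0, fun _ => nonneg_of_mem_NsqSet⟩

theorem smul_NsqSet_add_smul_NsqSet_subset {s t : ℝ} (hs : 0 ≤ s) (ht : 0 ≤ t) (hst : s + t = 1)
    (x : X) (y : Y) : s • NsqSet Q x y + t • NsqSet R x y ⊆ NsqSet (s • Q + t • R) x y := by
  rintro _ ⟨_, ⟨_, ⟨m, p, Qe, hp0, hp1, hQe, hQ, rfl⟩, rfl⟩,
    _, ⟨_, ⟨n, q, Re, hq0, hq1, hRe, hR, rfl⟩, rfl⟩, rfl⟩
  have hweights : Sum.elim (s • p) (t • q) ∈ stdSimplex ℝ (Fin m ⊕ Fin n) := by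
    refine ⟨Sum.rec (fun i => mul_nonneg hs (hp0 i)) (fun j => mul_nonneg ht (hq0 j)), ?_⟩
    simp [Fintype.sum_sum_type, ← Finset.mul_sum, hp1, hq1, hst]
  have hmem := sum_mul_mutInfo_mem_NsqSet (P := s • Q + t • R) (Pe := Sum.elim Qe Re) hweights
    (Sum.rec hQe hRe)
    (by simp [Fintype.sum_sum_type, mul_assoc, ← Finset.mul_sum, hQ, hR]) x y
  simpa [Fintype.sum_sum_type, mul_assoc, ← Finset.mul_sum] using hmem

variable [Fintype X] [Fintype Y] [Nonempty X] [Nonempty Y]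

theorem sInf_NsqSet_le_Nsq (P : A → B → X → Y → ℝ) (x : X) (y : Y) :
    sInf (NsqSet P x y) ≤ Nsq P :=
  Finset.le_sup' (fun xy : X × Y => sInf (NsqSet P xy.1 xy.2)) (Finset.mem_univ (x, y))

theorem convexOn_Nsq : ConvexOn ℝ {P : A → B → X → Y → ℝ | IsDevice P} Nsq := by
  refine ⟨convex_setOf_isDevice, fun Q hQ R hR s t hs ht hst => Finset.sup'_le _ _ ?_⟩
  rintro ⟨x, y⟩ -
  have hQne : (NsqSet Q x y).Nonempty := ⟨_, hQ.mutInfo_mem_NsqSet x y⟩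
  have hRne : (NsqSet R x y).Nonempty := ⟨_, hR.mutInfo_mem_NsqSet x y⟩
  calc sInf (NsqSet (s • Q + t • R) x y)
      ≤ sInf (s • NsqSet Q x y + t • NsqSet R x y) :=
        csInf_le_csInf (bddBelow_NsqSet _ x y) (hQne.smul_set.add hRne.smul_set)
          (smul_NsqSet_add_smul_NsqSet_subset hs ht hst x y)
    _ = s • sInf (NsqSet Q x y) + t • sInf (NsqSet R x y) := by
        rw [csInf_add hQne.smul_set ((bddBelow_NsqSet Q x y).smul_of_nonneg hs) hRne.smul_set
          ((bddBelow_NsqSet R x y).smul_of_nonneg ht), Real.sInf_smul_of_nonneg hs,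
          Real.sInf_smul_of_nonneg ht]
    _ ≤ s • Nsq Q + t • Nsq R := by
        gcongr <;> exact sInf_NsqSet_le_Nsq _ x y

theorem IsDevice.Nsq_le_logb_min_card (hP : IsDevice P) :
    Nsq P ≤ Real.logb 2 (min (Fintype.card A) (Fintype.card B) : ℕ) :=
  Finset.sup'_le _ _ fun ⟨x, y⟩ _ =>
    (csInf_le (bddBelow_NsqSet P x y) (hP.mutInfo_mem_NsqSet x y)).trans
      (mutInfo_le_logb_min_card (hP.uncurry_mem_stdSimplex x y))

theorem IsLocalDevice.Nsq_eq_zero (hP : IsLocalDevice P) : Nsq P = 0 := by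
  have hsInf (x : X) (y : Y) : sInf (NsqSet P x y) = 0 :=
    IsLeast.csInf_eq ⟨hP.zero_mem_NsqSet x y, fun _ => nonneg_of_mem_NsqSet⟩
  simp only [Nsq, hsInf, Finset.sup'_const]

end SquashedNonlocality

/-- Non-locality cost bound: if `P = α·Q + (1-α)·L` with `Q` a non-signaling device and
`L` a local device, then `N_sq(P) ≤ α · log₂(min(|A|, |B|))`. -/
theorem Nsq_le_nonlocality_cost {A B X Y : Type} [Fintype A] [Fintype B]
    [Fintype X] [Fintype Y] [Nonempty X] [Nonempty Y]
    (P Q L : A → B → X → Y → ℝ) (hP : IsDevice P) (hQ : IsDevice Q)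
    (hL : IsLocalDevice L)
    (α : ℝ) (hα0 : 0 ≤ α) (hα1 : α ≤ 1)
    (hdecomp : ∀ a b x y, P a b x y = α * Q a b x y + (1 - α) * L a b x y) :
    Nsq P ≤ α * Real.logb 2 ((min (Fintype.card A) (Fintype.card B) : ℕ) : ℝ) := by
  have hmix : P = α • Q + (1 - α) • L := by
    ext a b x y
    exact hdecomp a b x y
  calc Nsq P = Nsq (α • Q + (1 - α) • L) := by rw [hmix]
    _ ≤ α * Nsq Q + (1 - α) * Nsq L :=
        convexOn_Nsq.2 hQ hL.isDevice hα0 (sub_nonneg.2 hα1) (add_sub_cancel α 1)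
    _ = α * Nsq Q := by rw [hL.Nsq_eq_zero, mul_zero, add_zero]
    _ ≤ α * Real.logb 2 ((min (Fintype.card A) (Fintype.card B) : ℕ) : ℝ) :=
        mul_le_mul_of_nonneg_left hQ.Nsq_le_logb_min_card hα0
end

section
/- Strong secrecy implies trace-norm security: let K and T be finite sets with |K| >= 2, let Pbar be a probability distribution on K x K x K x T with coordinates (S_A, S_B, S, T), and let P be its marginal on (S_A, S_B, T). Suppose: Pr[S_A = S_B = S] := sum over (s,t) of Pbar(s,s,s,t) >= 1 - epsilon; I(S : T)_{Pbar} <= epsilon; the marginal of S is uniform, i.e. the S-marginal of Pbar equals 1/|K| at every point of K; and 0 <= epsilon <= 1/2. Define P^ideal(s_A,s_B,t) := (delta_{s_A,s_B}/|K|) * P_T(t), where P_T is the T-marginal of P and delta is the Kronecker delta. Then (1/2) * sum over (s_A,s_B,t) of | P(s_A,s_B,t) - P^ideal(s_A,s_B,t) | <= (1/sqrt(2)) * sqrt( epsilon + h(epsilon) + epsilon * log2(|K| - 1) ) + 2*epsilon. -/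
/-- The binary Shannon entropy `h(ε) = -ε log₂ ε - (1-ε) log₂ (1-ε)` (with `h(0)=0`). -/
noncomputable def binEnt (x : ℝ) : ℝ :=
  -(x * Real.logb 2 x) - (1 - x) * Real.logb 2 (1 - x)

/-! By the triangle inequality through the law of `(S, S, T)`, the distance to the ideal
distribution splits into two parts. The laws of `(S_A, S_B, T)` and `(S, S, T)` share the mass of
the event `S_A = S_B = S`, hence are `Pr[¬ S_A = S_B = S]`-close. The distance from `(S, S, T)` to
the ideal distribution is the distance from the law of `(S, T)` to the product of its marginals,
which is controlled by Pinsker's inequality because `I(S : T)` is the relative entropy between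
these two. -/

section Pinsker

open InformationTheory

lemma three_mul_sub_one_sq_le_mul_klFun {x : ℝ} (hx : 0 ≤ x) :
    3 * (x - 1) ^ 2 ≤ (2 * x + 4) * klFun x := by
  let f : ℝ → ℝ := fun y ↦ (2 * y + 4) * klFun y - 3 * (y - 1) ^ 2
  let f' : ℝ → ℝ := fun y ↦ 4 * (y + 1) * Real.log y - 8 * (y - 1)
  let f'' : ℝ → ℝ := fun y ↦ 4 * (Real.log y - (1 - y⁻¹))
  have hf : ∀ y, 0 < y → HasDerivAt f (f' y) y := fun y hy ↦ by
    have h := ((((hasDerivAt_id' y).const_mul 2).add_const 4).mul (hasDerivAt_klFun hy.ne')).sub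
      ((((hasDerivAt_id' y).sub_const 1).pow 2).const_mul 3)
    refine h.congr_deriv ?_
    simp only [f', klFun_apply]
    ring
  have hf' : ∀ y, 0 < y → HasDerivAt f' (f'' y) y := fun y hy ↦ by
    have h := ((((hasDerivAt_id' y).add_const 1).const_mul 4).mul (Real.hasDerivAt_log hy.ne')).sub
      (((hasDerivAt_id' y).sub_const 1).const_mul 8)
    refine h.congr_deriv ?_
    simp only [f'']
    field_simp
    ring
  have hconvex : ConvexOn ℝ (Set.Ici 0) f := by
    refine convexOn_of_hasDerivWithinAt2_nonneg (f' := f') (f'' := f'') (convex_Ici 0)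
      (by fun_prop) ?_ ?_ ?_ <;> rw [interior_Ici]
    · exact fun y hy ↦ (hf y hy).hasDerivWithinAt
    · exact fun y hy ↦ (hf' y hy).hasDerivWithinAt
    · exact fun y hy ↦ mul_nonneg (by norm_num)
        (sub_nonneg.2 (Real.one_sub_inv_le_log_of_pos hy))
  have hcrit : derivWithin f (Set.Ioi 1) 1 = 0 := by
    rw [(hf 1 one_pos).hasDerivWithinAt.derivWithin (uniqueDiffWithinAt_Ioi 1)]
    simp [f']
  have hmin : IsMinOn f (Set.Ici 0) 1 :=
    hconvex.isMinOn_of_rightDeriv_eq_zero (by simp) hcrit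
  have hf1 : f 1 = 0 := by simp [f, klFun_one]
  exact sub_nonneg.1 (hf1 ▸ hmin hx)

variable {ι : Type*} [Fintype ι]

/-- Relative entropy (base 2) of `p` with respect to `q`. Where `q i = 0 < p i` the summand is `0`
instead of `∞`, so it is meaningful only when `p` vanishes wherever `q` does. -/
noncomputable def relEntropy (p q : ι → ℝ) : ℝ :=
  ∑ i, p i * Real.logb 2 (p i / q i)

lemma log_two_mul_relEntropy {p q : ι → ℝ} (hpq : ∀ i, q i = 0 → p i = 0)
    (hsum : ∑ i, p i = ∑ i, q i) :
    Real.log 2 * relEntropy p q = ∑ i, q i * klFun (p i / q i) := by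
  have hterm (i : ι) :
      q i * klFun (p i / q i) = Real.log 2 * (p i * Real.logb 2 (p i / q i)) + (q i - p i) := by
    have hcancel : q i * (p i / q i) = p i := mul_div_cancel_of_imp' (hpq i)
    have hlog : Real.log 2 * Real.logb 2 (p i / q i) = Real.log (p i / q i) :=
      mul_div_cancel₀ _ (Real.log_pos one_lt_two).ne'
    rw [klFun_apply]
    linear_combination (Real.log (p i / q i) - 1) * hcancel - p i * hlog
  simp only [hterm, Finset.sum_add_distrib, Finset.sum_sub_distrib, ← Finset.mul_sum, hsum,
    sub_self, add_zero, relEntropy]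

theorem pinsker_inequality {p q : ι → ℝ} (hp : ∀ i, 0 ≤ p i) (hq : ∀ i, 0 ≤ q i)
    (hpq : ∀ i, q i = 0 → p i = 0) (hp_sum : ∑ i, p i = 1) (hq_sum : ∑ i, q i = 1) :
    (∑ i, |p i - q i|) ^ 2 ≤ 2 * (Real.log 2 * relEntropy p q) := by
  have hterm (i : ι) : |p i - q i| ^ 2 ≤ (2 * p i + 4 * q i) / 3 * (q i * klFun (p i / q i)) := by
    have hcancel : q i * (p i / q i) = p i := mul_div_cancel_of_imp' (hpq i)
    have hscaled := mul_le_mul_of_nonneg_left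
      (three_mul_sub_one_sq_le_mul_klFun (div_nonneg (hp i) (hq i))) (sq_nonneg (q i))
    rw [sq_abs]
    generalize p i / q i = x at *
    rw [← hcancel]
    linarith
  -- Cauchy-Schwarz; the weights `(2 * p i + 4 * q i) / 3` add up to the constant `2`.
  calc (∑ i, |p i - q i|) ^ 2
      ≤ (∑ i, (2 * p i + 4 * q i) / 3) * ∑ i, q i * klFun (p i / q i) :=
        Finset.sum_sq_le_sum_mul_sum_of_sq_le_mul _
          (fun i _ ↦ by linarith [hp i, hq i])
          (fun i _ ↦ mul_nonneg (hq i) (klFun_nonneg (div_nonneg (hp i) (hq i))))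
          (fun i _ ↦ hterm i)
    _ = 2 * (Real.log 2 * relEntropy p q) := by
        rw [log_two_mul_relEntropy hpq (hp_sum.trans hq_sum.symm), ← Finset.sum_div,
          Finset.sum_add_distrib, ← Finset.mul_sum, ← Finset.mul_sum, hp_sum, hq_sum]
        norm_num

end Pinsker

section MutualInformation

variable {α β : Type} [Fintype α] [Fintype β] {R : α → β → ℝ}

lemma eq_zero_of_marginal_mul_marginal_eq_zero (hR : ∀ a b, 0 ≤ R a b) {a : α} {b : β}
    (h : (∑ b', R a b') * ∑ a', R a' b = 0) : R a b = 0 := by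
  rcases mul_eq_zero.1 h with h | h
  · exact congrFun ((Fintype.sum_eq_zero_iff_of_nonneg (hR a)).1 h) b
  · exact congrFun ((Fintype.sum_eq_zero_iff_of_nonneg (hR · b)).1 h) a

lemma mutInfo_eq_relEntropy (hR : ∀ a b, 0 ≤ R a b) :
    mutInfo R = relEntropy (fun x : α × β ↦ R x.1 x.2)
      (fun x ↦ (∑ b, R x.1 b) * ∑ a, R a x.2) := by
  have hterm (a : α) (b : β) :
      R a b * Real.logb 2 (R a b / ((∑ b', R a b') * ∑ a', R a' b)) =
        R a b * Real.logb 2 (R a b) - R a b * Real.logb 2 (∑ b', R a b') -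
          R a b * Real.logb 2 (∑ a', R a' b) := by
    rcases eq_or_ne (R a b) 0 with h | h
    · simp [h]
    · have hprod := mt (eq_zero_of_marginal_mul_marginal_eq_zero hR) h
      rw [Real.logb_div h hprod,
        Real.logb_mul (left_ne_zero_of_mul hprod) (right_ne_zero_of_mul hprod)]
      ring
  simp only [mutInfo, shannonEnt, relEntropy, Fintype.sum_prod_type, hterm,
    Finset.sum_sub_distrib]
  simp only [Finset.sum_mul]
  rw [Finset.sum_comm (s := (Finset.univ : Finset β))]
  ring

theorem sum_abs_sub_marginal_mul_marginal_le (hR : ∀ a b, 0 ≤ R a b)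
    (hsum : ∑ a, ∑ b, R a b = 1) :
    ∑ a, ∑ b, |R a b - (∑ b', R a b') * ∑ a', R a' b| ≤
      2 * √(Real.log 2 / 2 * mutInfo R) := by
  have hpinsker := pinsker_inequality (p := fun x : α × β ↦ R x.1 x.2)
    (q := fun x ↦ (∑ b, R x.1 b) * ∑ a, R a x.2) (fun x ↦ hR x.1 x.2)
    (fun x ↦ mul_nonneg (Fintype.sum_nonneg (hR x.1)) (Fintype.sum_nonneg (hR · x.2)))
    (fun _ ↦ eq_zero_of_marginal_mul_marginal_eq_zero hR)
    (by rw [Fintype.sum_prod_type, hsum])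
    (by
      rw [Fintype.sum_prod_type]
      dsimp only
      rw [← Finset.sum_mul_sum, hsum, Finset.sum_comm, hsum, mul_one])
  rw [← mutInfo_eq_relEntropy hR, Fintype.sum_prod_type] at hpinsker
  rw [← div_le_iff₀' two_pos]
  refine Real.le_sqrt_of_sq_le ?_
  linarith

end MutualInformation

section Duplication

lemma sum_abs_sub_le_of_le {ι : Type*} {s : Finset ι} {m f g : ι → ℝ}
    (hf : ∀ i ∈ s, m i ≤ f i) (hg : ∀ i ∈ s, m i ≤ g i) :
    ∑ i ∈ s, |f i - g i| ≤ ∑ i ∈ s, f i + ∑ i ∈ s, g i - 2 * ∑ i ∈ s, m i := by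
  rw [Finset.mul_sum, ← Finset.sum_add_distrib, ← Finset.sum_sub_distrib]
  refine Finset.sum_le_sum fun i hi ↦ abs_le.2 ⟨?_, ?_⟩ <;> linarith [hf i hi, hg i hi]

lemma sum_sum_comm_sum_sum {α β γ δ M : Type*} [Fintype α] [Fintype β] [Fintype γ] [Fintype δ]
    [AddCommMonoid M] (f : α → β → γ → δ → M) :
    ∑ c, ∑ d, ∑ a, ∑ b, f a b c d = ∑ a, ∑ b, ∑ c, ∑ d, f a b c d := by
  simpa only [Fintype.sum_prod_type] using
    Finset.sum_comm (s := (Finset.univ : Finset (γ × δ))) (t := (Finset.univ : Finset (α × β)))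
      (f := fun x y ↦ f y.1 y.2 x.1 x.2)

variable {K T : Type*} [DecidableEq K]

/-- The joint distribution of `(S, S, T)` when `(S, T)` has joint distribution `Q`. It serves as
the intermediate point between the actual keys and the ideal ones. -/
def duplicateFst (Q : K → T → ℝ) (a b : K) (t : T) : ℝ :=
  if a = b then Q a t else 0

variable [Fintype K] [Fintype T]

lemma sum_duplicateFst (Q : K → T → ℝ) :
    ∑ a, ∑ b, ∑ t, duplicateFst Q a b t = ∑ a, ∑ t, Q a t := by
  refine Finset.sum_congr rfl fun a _ ↦ ?_
  rw [Finset.sum_comm]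
  simp [duplicateFst]

lemma sum_abs_duplicateFst_sub_duplicateFst (Q Q' : K → T → ℝ) :
    ∑ a, ∑ b, ∑ t, |duplicateFst Q a b t - duplicateFst Q' a b t| =
      ∑ a, ∑ t, |Q a t - Q' a t| := by
  rw [← sum_duplicateFst fun a t ↦ |Q a t - Q' a t|]
  refine Finset.sum_congr rfl fun a _ ↦ Finset.sum_congr rfl fun b _ ↦
    Finset.sum_congr rfl fun t _ ↦ ?_
  by_cases h : a = b <;> simp [duplicateFst, h]

lemma sum_abs_sub_duplicateFst_le {Pbar : K → K → K → T → ℝ}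
    (hnonneg : ∀ a b s t, 0 ≤ Pbar a b s t) :
    ∑ a, ∑ b, ∑ t,
        |∑ s, Pbar a b s t - duplicateFst (fun s t ↦ ∑ a', ∑ b', Pbar a' b' s t) a b t| ≤
      2 * (∑ a, ∑ b, ∑ s, ∑ t, Pbar a b s t - ∑ s, ∑ t, Pbar s s s t) := by
  set R : K → T → ℝ := fun s t ↦ ∑ a, ∑ b, Pbar a b s t
  let agree : K → T → ℝ := fun s t ↦ Pbar s s s t
  have hagree_actual (a b : K) (t : T) : duplicateFst agree a b t ≤ ∑ s, Pbar a b s t := by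
    rw [duplicateFst]
    split_ifs with hab
    · subst hab
      exact Finset.single_le_sum (f := (Pbar a a · t)) (fun s _ ↦ hnonneg a a s t)
        (Finset.mem_univ a)
    · exact Fintype.sum_nonneg fun s ↦ hnonneg a b s t
  have hagree_dup (a b : K) (t : T) : duplicateFst agree a b t ≤ duplicateFst R a b t := by
    rw [duplicateFst, duplicateFst]
    split_ifs
    · calc agree a t ≤ ∑ b', Pbar a b' a t :=
            Finset.single_le_sum (f := (Pbar a · a t)) (fun b' _ ↦ hnonneg a b' a t)
              (Finset.mem_univ a)
        _ ≤ R a t :=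
            Finset.single_le_sum (f := fun a' ↦ ∑ b', Pbar a' b' a t)
              (fun a' _ ↦ Fintype.sum_nonneg fun b' ↦ hnonneg a' b' a t) (Finset.mem_univ a)
    · exact le_rfl
  have hactual_sum : ∑ a, ∑ b, ∑ t, ∑ s, Pbar a b s t = ∑ a, ∑ b, ∑ s, ∑ t, Pbar a b s t :=
    Finset.sum_congr rfl fun a _ ↦ Finset.sum_congr rfl fun b _ ↦ Finset.sum_comm
  have hR_sum : ∑ s, ∑ t, R s t = ∑ a, ∑ b, ∑ s, ∑ t, Pbar a b s t := sum_sum_comm_sum_sum Pbar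
  have hoverlap := sum_abs_sub_le_of_le (s := (Finset.univ : Finset (K × K × T)))
    (fun x _ ↦ hagree_actual x.1 x.2.1 x.2.2) (fun x _ ↦ hagree_dup x.1 x.2.1 x.2.2)
  simp only [Fintype.sum_prod_type, sum_duplicateFst, hactual_sum, hR_sum] at hoverlap
  linarith

end Duplication

lemma binEnt_eq_binEntropy_div_log_two (x : ℝ) : binEnt x = Real.binEntropy x / Real.log 2 := by
  simp only [binEnt, Real.binEntropy, Real.logb, Real.log_inv]
  ring

lemma binEnt_nonneg {x : ℝ} (hx₀ : 0 ≤ x) (hx₁ : x ≤ 1) : 0 ≤ binEnt x := by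
  rw [binEnt_eq_binEntropy_div_log_two]
  exact div_nonneg (Real.binEntropy_nonneg hx₀ hx₁) (Real.log_nonneg one_le_two)

lemma sqrt_log_two_div_two_mul_le {ε I N : ℝ} (hε₀ : 0 ≤ ε) (hε₁ : ε ≤ 1) (hI : I ≤ ε)
    (hN : 2 ≤ N) :
    √(Real.log 2 / 2 * I) ≤ 1 / √2 * √(ε + binEnt ε + ε * Real.logb 2 (N - 1)) := by
  have hlog : 0 ≤ ε * Real.logb 2 (N - 1) :=
    mul_nonneg hε₀ (Real.logb_nonneg one_lt_two (by linarith))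
  have hlog_two : Real.log 2 * I ≤ ε := by
    nlinarith [Real.log_two_gt_d9, Real.log_two_lt_d9]
  rw [one_div, ← Real.sqrt_inv, ← Real.sqrt_mul (by norm_num)]
  refine Real.sqrt_le_sqrt ?_
  linarith [binEnt_nonneg hε₀ hε₁]

theorem strong_secrecy_implies_security_general {K T : Type} [Fintype K] [Fintype T]
    [DecidableEq K] (Pbar : K → K → K → T → ℝ)
    (hnonneg : ∀ sA sB s t, 0 ≤ Pbar sA sB s t)
    (hsum : ∑ sA, ∑ sB, ∑ s, ∑ t, Pbar sA sB s t = 1)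
    (P : K → K → T → ℝ)
    (hPdef : ∀ sA sB t, P sA sB t = ∑ s, Pbar sA sB s t) :
    (1 / 2) * ∑ sA, ∑ sB, ∑ t,
        |P sA sB t -
          (if sA = sB then ∑ sA', ∑ sB', ∑ t', Pbar sA' sB' sA t' else 0) *
            (∑ sA', ∑ sB', P sA' sB' t)| ≤
      √(Real.log 2 / 2 * mutInfo (fun s t ↦ ∑ sA, ∑ sB, Pbar sA sB s t)) +
        (1 - ∑ s, ∑ t, Pbar s s s t) := by
  set R : K → T → ℝ := fun s t ↦ ∑ sA, ∑ sB, Pbar sA sB s t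
  let Q : K → T → ℝ := fun s t ↦ (∑ t', R s t') * ∑ s', R s' t
  have hR_sum : ∑ s, ∑ t, R s t = 1 := (sum_sum_comm_sum_sum Pbar).trans hsum
  have hS (s : K) : ∑ sA, ∑ sB, ∑ t, Pbar sA sB s t = ∑ t, R s t := Finset.sum_comm_cycle
  have hT (t : T) : ∑ sA, ∑ sB, ∑ s, Pbar sA sB s t = ∑ s, R s t := Finset.sum_comm_cycle
  have hideal (sA sB : K) (t : T) :
      (if sA = sB then ∑ sA', ∑ sB', ∑ t', Pbar sA' sB' sA t' else 0) *
        (∑ sA', ∑ sB', P sA' sB' t) = duplicateFst Q sA sB t := by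
    simp only [hPdef, hS, hT, ite_mul, zero_mul, duplicateFst, Q]
  have hactual := sum_abs_sub_duplicateFst_le hnonneg
  have hsecret := sum_abs_sub_marginal_mul_marginal_le
    (fun s t ↦ Fintype.sum_nonneg fun sA ↦ Fintype.sum_nonneg fun sB ↦ hnonneg sA sB s t) hR_sum
  have htriangle : ∑ sA, ∑ sB, ∑ t, |P sA sB t - duplicateFst Q sA sB t| ≤
      ∑ sA, ∑ sB, ∑ t, |P sA sB t - duplicateFst R sA sB t| + ∑ s, ∑ t, |R s t - Q s t| := by
    rw [← sum_abs_duplicateFst_sub_duplicateFst]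
    simp only [← Finset.sum_add_distrib]
    gcongr
    exact abs_sub_le _ _ _
  simp only [← hPdef, hsum] at hactual
  simp only [hideal]
  linarith

/-- Strong secrecy implies trace-norm security: if `Pbar` is a distribution on
`K × K × K × T` with coordinates `(S_A, S_B, S, T)` such that `Pr[S_A = S_B = S] ≥ 1-ε`,
`I(S:T) ≤ ε`, the marginal of `S` is uniform and `0 ≤ ε ≤ 1/2`, then the marginal `P`
of `Pbar` on `(S_A, S_B, T)` is `(1/√2)·√(ε + h(ε) + ε·log₂(|K|-1)) + 2ε`-close in
variational distance to the ideal distribution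
`P^ideal(s_A,s_B,t) = (δ_{s_A,s_B}/|K|)·P_T(t)`. -/
theorem strong_secrecy_implies_security {K T : Type} [Fintype K] [Fintype T]
    [DecidableEq K] (hK : 2 ≤ Fintype.card K)
    (Pbar : K → K → K → T → ℝ)
    (hnonneg : ∀ sA sB s t, 0 ≤ Pbar sA sB s t)
    (hsum : ∑ sA, ∑ sB, ∑ s, ∑ t, Pbar sA sB s t = 1)
    (ε : ℝ) (hε0 : 0 ≤ ε) (hε : ε ≤ 1/2)
    (hcor : 1 - ε ≤ ∑ s, ∑ t, Pbar s s s t)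
    (hI : mutInfo (fun s t => ∑ sA, ∑ sB, Pbar sA sB s t) ≤ ε)
    (hunif : ∀ s, ∑ sA, ∑ sB, ∑ t, Pbar sA sB s t = 1 / (Fintype.card K : ℝ))
    (P : K → K → T → ℝ)
    (hPdef : ∀ sA sB t, P sA sB t = ∑ s, Pbar sA sB s t) :
    (1/2) * ∑ sA, ∑ sB, ∑ t,
        |P sA sB t -
          (if sA = sB then 1 / (Fintype.card K : ℝ) else 0) *
            (∑ sA', ∑ sB', P sA' sB' t)| ≤
      (1 / Real.sqrt 2) *
          Real.sqrt (ε + binEnt ε + ε * Real.logb 2 ((Fintype.card K : ℝ) - 1)) +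
        2 * ε := by
  have hgeneral := strong_secrecy_implies_security_general Pbar hnonneg hsum P hPdef
  simp only [hunif] at hgeneral
  linarith [sqrt_log_two_div_two_mul_le hε0 (by linarith) hI
    (show (2 : ℝ) ≤ Fintype.card K by exact_mod_cast hK)]
end
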